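/- Consider a smooth solution of the Bianchi I Einstein–Vlasov system on [t₀,∞) with expanding initial data (H(t₀) < 0) and f₀ not identically zero. There exists ε₀ > 0 and a constant C > 0 such that if F(t₀) ≤ ε₀ and P(t₀) ≤ ε₀, then the anisotropy decays quadratically: F(t) ≤ C t^{-2} for all large t; in particular the spacetime isotropizes (F(t) → 0 as t → ∞). -/

import Mathlib

/-!
The decay holds for every expanding solution with `f₀ ≠ 0`, whatever the size of the data at `t₀`
(`BianchiIVlasov.anisotropy_decay`), because enough quantities are monotone.

Write `h = -H`, `q = σ_{ab} σ^{ab}`, `V = √(det g)`, `y = √V`, `s = tr S`. The Einstein equations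
become `V' = h V`, `y' = h y / 2` and `y'' = -(3/8 q + 2π s) y ≤ 0`. The constraint reads
`y'² = 6π ρ V + 3/8 q V`, and since `ρ V ≥ m ∫ f₀` it keeps `h` from vanishing and gives
`y' ≥ ℓ > 0`; in particular `y` grows linearly.

For each momentum `p`, Cauchy-Schwarz gives `(|p|²)' ≤ (-2/3 h + 2 √q) |p|²`. The term `√q` is split
by Young's inequality into a small multiple of `h` and a multiple of `q / h`; the latter is at most a
multiple of `-y''`, as `h y ≥ 2ℓ`. Hence `|p|² y^{7/6} exp (K y')` is nonincreasing
(`momentum_decay`), so that `s V ≤ m⁻¹ ∫ f₀ |p|²` decays like `y^{-7/6}`.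

Finally `Q = V² q` satisfies `Q' = -16π V² σ^{ab} S_{ab} ≤ 16π √Q s V`. Thus `√(Q + 1)` grows at a
rate at most `8π s V`, which is integrable in time because `7/6 > 1` and `y' ≥ ℓ`, and `Q` is bounded
(`rescaled_shear_bounded`). Then `F = Q / (h V)²` with `h V = 2 y y'` growing at least linearly.
-/

open Matrix MeasureTheory

attribute [local instance] Matrix.normedAddCommGroup Matrix.normedSpace

/-- The energy density `ρ` of collisionless matter with distribution function `f₀`
(in covariant momentum components) on a spatial metric `g`. -/
noncomputable def energyDensity (m : ℝ) (f₀ : (Fin 3 → ℝ) → ℝ)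
    (g : Matrix (Fin 3) (Fin 3) ℝ) : ℝ :=
  ∫ p : Fin 3 → ℝ, f₀ p * Real.sqrt (m ^ 2 + p ⬝ᵥ g⁻¹.mulVec p) / Real.sqrt g.det

/-- The spatial stress tensor `S_{ab}` (with lower indices). -/
noncomputable def stress (m : ℝ) (f₀ : (Fin 3 → ℝ) → ℝ)
    (g : Matrix (Fin 3) (Fin 3) ℝ) : Matrix (Fin 3) (Fin 3) ℝ :=
  Matrix.of fun a b => ∫ p : Fin 3 → ℝ,
    f₀ p * p a * p b / (Real.sqrt (m ^ 2 + p ⬝ᵥ g⁻¹.mulVec p) * Real.sqrt g.det)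

/-- The mean curvature `H = tr (g⁻¹ k)`. -/
noncomputable def meanCurv (g k : Matrix (Fin 3) (Fin 3) ℝ) : ℝ := (g⁻¹ * k).trace

/-- The shear `σ = k - (H/3) g`, the trace-free part of the second fundamental form. -/
noncomputable def shear (g k : Matrix (Fin 3) (Fin 3) ℝ) : Matrix (Fin 3) (Fin 3) ℝ :=
  k - (meanCurv g k / 3) • g

/-- The anisotropy `F = σ_{ab} σ^{ab} / H²`. -/
noncomputable def anisotropy (g k : Matrix (Fin 3) (Fin 3) ℝ) : ℝ :=
  (g⁻¹ * shear g k * g⁻¹ * shear g k).trace / meanCurv g k ^ 2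

/-- `P`, the supremum of the absolute values of the momenta on the support of `f₀`. -/
noncomputable def momentumSup (f₀ : (Fin 3 → ℝ) → ℝ)
    (g : Matrix (Fin 3) (Fin 3) ℝ) : ℝ :=
  sSup ((fun p => Real.sqrt (p ⬝ᵥ g⁻¹.mulVec p)) '' {p | f₀ p ≠ 0})

/-- A smooth solution of the Bianchi I Einstein–Vlasov system on `[t₀, ∞)`
(Gaussian time, zero cosmological constant, particle mass `m > 0`). -/
structure BianchiIVlasov (t₀ m : ℝ) (g k : ℝ → Matrix (Fin 3) (Fin 3) ℝ)
    (f₀ : (Fin 3 → ℝ) → ℝ) : Prop where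
  m_pos : 0 < m
  g_smooth : ContDiffOn ℝ (⊤ : ℕ∞) g (Set.Ici t₀)
  k_smooth : ContDiffOn ℝ (⊤ : ℕ∞) k (Set.Ici t₀)
  f₀_smooth : ContDiff ℝ (⊤ : ℕ∞) f₀
  f₀_nonneg : ∀ p, 0 ≤ f₀ p
  f₀_cpt : HasCompactSupport f₀
  g_posdef : ∀ t ≥ t₀, (g t).PosDef
  g_symm : ∀ t ≥ t₀, (g t).IsSymm
  k_symm : ∀ t ≥ t₀, (k t).IsSymm
  evol_g : ∀ t ≥ t₀, HasDerivWithinAt g (-(2 : ℝ) • k t) (Set.Ici t₀) t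
  evol_k : ∀ t ≥ t₀, HasDerivWithinAt k
    (meanCurv (g t) (k t) • k t - (2 : ℝ) • (k t * (g t)⁻¹ * k t)
      - (8 * Real.pi) • (stress m f₀ (g t)
          - (((g t)⁻¹ * stress m f₀ (g t)).trace / 2) • g t)
      - (4 * Real.pi * energyDensity m f₀ (g t)) • g t) (Set.Ici t₀) t
  constraint : ∀ t ≥ t₀,
    meanCurv (g t) (k t) ^ 2 - ((g t)⁻¹ * k t * (g t)⁻¹ * k t).trace
      = 16 * Real.pi * energyDensity m f₀ (g t)

/-! ### Linear algebra on a positive definite metric -/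

section LinearAlgebra

lemma frame_exists {g : Matrix (Fin 3) (Fin 3) ℝ} (hg : g.PosDef) :
    ∃ B : Matrix (Fin 3) (Fin 3) ℝ, g⁻¹ = Bᵀ * B := by
  open scoped MatrixOrder Matrix.Norms.L2Operator in
  obtain ⟨B, hB⟩ := CStarAlgebra.nonneg_iff_eq_star_mul_self.1 hg.inv.posSemidef.nonneg
  exact ⟨B, by simpa [Matrix.star_eq_conjTranspose] using hB⟩

/-- In an orthonormal frame `B` for `g`, `σ_{ab} σ^{ab}` is the sum of the squares of the
entries of the symmetric matrix `B σ Bᵀ`. -/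
lemma trace_frame {B σ : Matrix (Fin 3) (Fin 3) ℝ} (hσ : σ.IsSymm) :
    (Bᵀ * B * σ * (Bᵀ * B) * σ).trace = ∑ i, ∑ j, (B * σ * Bᵀ) i j ^ 2 := by
  have hX : (B * σ * Bᵀ)ᵀ = B * σ * Bᵀ := by
    simp only [Matrix.transpose_mul, Matrix.transpose_transpose, hσ.eq, Matrix.mul_assoc]
  have h1 : (Bᵀ * B * σ * (Bᵀ * B) * σ).trace = ((B * σ * Bᵀ) * (B * σ * Bᵀ)ᵀ).trace := by
    rw [hX]
    have : Bᵀ * B * σ * (Bᵀ * B) * σ = Bᵀ * (B * σ * Bᵀ * B * σ) := by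
      simp only [Matrix.mul_assoc]
    rw [this, Matrix.trace_mul_comm]
    simp only [Matrix.mul_assoc]
  rw [h1, Matrix.trace]
  refine Finset.sum_congr rfl fun i _ => ?_
  simp only [Matrix.diag_apply, Matrix.mul_apply (M := B * σ * Bᵀ), Matrix.transpose_apply, sq]

lemma trace_sq_nonneg {g σ : Matrix (Fin 3) (Fin 3) ℝ} (hg : g.PosDef) (hσ : σ.IsSymm) :
    0 ≤ (g⁻¹ * σ * g⁻¹ * σ).trace := by
  obtain ⟨B, hB⟩ := frame_exists hg
  rw [hB, trace_frame hσ]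
  positivity

lemma normSq_nonneg {g : Matrix (Fin 3) (Fin 3) ℝ} (hg : g.PosDef) (p : Fin 3 → ℝ) :
    0 ≤ p ⬝ᵥ g⁻¹.mulVec p := by
  simpa using hg.inv.posSemidef.dotProduct_mulVec_nonneg p

lemma quadForm_frame (B X : Matrix (Fin 3) (Fin 3) ℝ) (p : Fin 3 → ℝ) :
    p ⬝ᵥ (Bᵀ * X * B).mulVec p = B.mulVec p ⬝ᵥ X.mulVec (B.mulVec p) := by
  rw [Matrix.dotProduct_mulVec (B.mulVec p), ← Matrix.dotProduct_mulVec,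
    Matrix.mul_assoc, ← Matrix.mulVec_mulVec, Matrix.dotProduct_mulVec, Matrix.vecMul_transpose,
    Matrix.mulVec_mulVec]

lemma quadForm_sq_le (X : Matrix (Fin 3) (Fin 3) ℝ) (w : Fin 3 → ℝ) :
    (w ⬝ᵥ X.mulVec w) ^ 2 ≤ (∑ i, ∑ j, X i j ^ 2) * (w ⬝ᵥ w) ^ 2 := by
  have h := Finset.sum_mul_sq_le_sq_mul_sq (Finset.univ : Finset (Fin 3 × Fin 3))
    (fun x => X x.1 x.2) (fun x => w x.1 * w x.2)
  simp only [Fintype.sum_prod_type] at h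
  have e1 : w ⬝ᵥ X.mulVec w = ∑ i, ∑ j, X i j * (w i * w j) := by
    simp only [dotProduct, Matrix.mulVec, Finset.mul_sum]
    exact Finset.sum_congr rfl fun i _ => Finset.sum_congr rfl fun j _ => by ring
  have e2 : (w ⬝ᵥ w) ^ 2 = ∑ i, ∑ j, (w i * w j) ^ 2 := by
    rw [sq, dotProduct, Finset.sum_mul_sum]
    exact Finset.sum_congr rfl fun i _ => Finset.sum_congr rfl fun j _ => by ring
  rwa [e1, e2]

/-- Cauchy-Schwarz for the metric: `|σ^{ab} p_a p_b| ≤ |σ| |p|²`. -/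
lemma abs_shear_le {g σ : Matrix (Fin 3) (Fin 3) ℝ} (hg : g.PosDef) (hσ : σ.IsSymm)
    (p : Fin 3 → ℝ) :
    |p ⬝ᵥ (g⁻¹ * σ * g⁻¹).mulVec p|
      ≤ Real.sqrt (g⁻¹ * σ * g⁻¹ * σ).trace * (p ⬝ᵥ g⁻¹.mulVec p) := by
  obtain ⟨B, hB⟩ := frame_exists hg
  have h1 : g⁻¹ * σ * g⁻¹ = Bᵀ * (B * σ * Bᵀ) * B := by
    rw [hB]; simp only [Matrix.mul_assoc]
  have h2 : p ⬝ᵥ g⁻¹.mulVec p = B.mulVec p ⬝ᵥ B.mulVec p := by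
    have := quadForm_frame B 1 p
    simpa [hB] using this
  have h3 : (g⁻¹ * σ * g⁻¹ * σ).trace = ∑ i, ∑ j, (B * σ * Bᵀ) i j ^ 2 := by
    rw [← trace_frame hσ, hB]
  have h0 := normSq_nonneg hg p
  rw [h3, h1, quadForm_frame, h2]
  rw [h2] at h0
  refine abs_le_of_sq_le_sq ?_ (by positivity)
  rw [mul_pow, Real.sq_sqrt (by positivity)]
  exact quadForm_sq_le _ _

lemma trace_shear {g k : Matrix (Fin 3) (Fin 3) ℝ} (hg : g.PosDef) :
    (g⁻¹ * shear g k * g⁻¹ * shear g k).trace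
      = (g⁻¹ * k * g⁻¹ * k).trace - meanCurv g k ^ 2 / 3 := by
  have hu : IsUnit g.det := hg.det_pos.ne'.isUnit
  have h1 : g⁻¹ * shear g k = g⁻¹ * k - (meanCurv g k / 3) • (1 : Matrix (Fin 3) (Fin 3) ℝ) := by
    rw [shear, Matrix.mul_sub, Matrix.mul_smul, Matrix.nonsing_inv_mul _ hu]
  rw [Matrix.mul_assoc (g⁻¹ * shear g k), h1, Matrix.mul_assoc (g⁻¹ * k)]
  simp only [Matrix.sub_mul, Matrix.mul_sub, Matrix.trace_sub, Matrix.smul_mul, Matrix.mul_smul,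
    Matrix.one_mul, Matrix.mul_one, Matrix.trace_smul, Matrix.trace_one, Fintype.card_fin,
    smul_eq_mul]
  rw [show (g⁻¹ * k).trace = meanCurv g k from rfl]
  push_cast
  ring

lemma shear_isSymm {g k : Matrix (Fin 3) (Fin 3) ℝ} (hg : g.IsSymm) (hk : k.IsSymm) :
    (shear g k).IsSymm := by
  rw [Matrix.IsSymm, shear, Matrix.transpose_sub, Matrix.transpose_smul, hg.eq, hk.eq]

end LinearAlgebra

/-! ### Differentiation of matrix curves -/

section Calculus

lemma hasDerivWithinAt_entry {A : ℝ → Matrix (Fin 3) (Fin 3) ℝ} {A' : Matrix (Fin 3) (Fin 3) ℝ}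
    {s : Set ℝ} {t : ℝ} (h : HasDerivWithinAt A A' s t) (i j : Fin 3) :
    HasDerivWithinAt (fun x => A x i j) (A' i j) s t :=
  hasDerivWithinAt_pi.1 (hasDerivWithinAt_pi.1 h i) j

lemma hasDerivWithinAt_matrix_mul {A B : ℝ → Matrix (Fin 3) (Fin 3) ℝ}
    {A' B' : Matrix (Fin 3) (Fin 3) ℝ} {s : Set ℝ} {t : ℝ}
    (hA : HasDerivWithinAt A A' s t) (hB : HasDerivWithinAt B B' s t) :
    HasDerivWithinAt (fun x => A x * B x) (A' * B t + A t * B') s t := by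
  refine hasDerivWithinAt_pi.2 fun i => hasDerivWithinAt_pi.2 fun j => ?_
  simp only [Matrix.mul_apply, Matrix.add_apply, ← Finset.sum_add_distrib]
  exact HasDerivWithinAt.fun_sum fun l _ =>
    (hasDerivWithinAt_entry hA i l).mul (hasDerivWithinAt_entry hB l j)

lemma hasDerivWithinAt_trace {A : ℝ → Matrix (Fin 3) (Fin 3) ℝ}
    {A' : Matrix (Fin 3) (Fin 3) ℝ} {s : Set ℝ} {t : ℝ} (hA : HasDerivWithinAt A A' s t) :
    HasDerivWithinAt (fun x => (A x).trace) A'.trace s t :=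
  HasDerivWithinAt.fun_sum fun i _ => hasDerivWithinAt_entry hA i i

lemma hasDerivWithinAt_quadForm {A : ℝ → Matrix (Fin 3) (Fin 3) ℝ}
    {A' : Matrix (Fin 3) (Fin 3) ℝ} {s : Set ℝ} {t : ℝ} (hA : HasDerivWithinAt A A' s t)
    (p : Fin 3 → ℝ) :
    HasDerivWithinAt (fun x => p ⬝ᵥ (A x).mulVec p) (p ⬝ᵥ A'.mulVec p) s t := by
  simp only [dotProduct, Matrix.mulVec]
  exact HasDerivWithinAt.fun_sum fun i _ => (HasDerivWithinAt.fun_sum fun j _ =>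
    (hasDerivWithinAt_entry hA i j).mul_const (p j)).const_mul (p i)

/-- The slope identity `A(x)⁻¹ - A(t)⁻¹ = -A(x)⁻¹ (A(x) - A(t)) A(t)⁻¹` and continuity of the
inverse give the derivative of the inverse metric. -/
lemma hasDerivWithinAt_matrix_inv {A : ℝ → Matrix (Fin 3) (Fin 3) ℝ}
    {A' : Matrix (Fin 3) (Fin 3) ℝ} {s : Set ℝ} {t : ℝ} (hA : HasDerivWithinAt A A' s t)
    (hu : ∀ x ∈ s, IsUnit (A x).det) (ht : t ∈ s) :
    HasDerivWithinAt (fun x => (A x)⁻¹) (-((A t)⁻¹ * A' * (A t)⁻¹)) s t := by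
  have hAt := hu t ht
  have hc : ContinuousWithinAt (fun x => (A x)⁻¹) s t := by
    have hdet : ContinuousWithinAt (fun x => (A x).det) s t :=
      (continuous_id.matrix_det.continuousAt).comp_continuousWithinAt hA.continuousWithinAt
    have hadj : ContinuousWithinAt (fun x => (A x).adjugate) s t :=
      (continuous_id.matrix_adjugate.continuousAt).comp_continuousWithinAt hA.continuousWithinAt
    have := (hdet.inv₀ hAt.ne_zero).smul hadj
    simp only [Matrix.inv_def, Ring.inverse_eq_inv']
    exact this
  replace hA := hasDerivWithinAt_iff_tendsto_slope.1 hA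
  refine hasDerivWithinAt_iff_tendsto_slope.2 ?_
  have hc' : Filter.Tendsto (fun x => (A x)⁻¹) (nhdsWithin t (s \ {t})) (nhds (A t)⁻¹) :=
    hc.mono_left (nhdsWithin_mono _ Set.sdiff_subset)
  have hlim := ((hc'.mul hA).mul_const (A t)⁻¹).neg
  refine hlim.congr' ?_
  filter_upwards [self_mem_nhdsWithin] with x hx
  have hAx := hu x hx.1
  have key : (A x)⁻¹ * (A x - A t) * (A t)⁻¹ = (A t)⁻¹ - (A x)⁻¹ := by
    rw [Matrix.mul_sub, Matrix.nonsing_inv_mul _ hAx, Matrix.sub_mul, Matrix.one_mul,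
      Matrix.mul_assoc, Matrix.mul_nonsing_inv _ hAt, Matrix.mul_one]
  simp only [slope_def_module]
  rw [Matrix.mul_smul, Matrix.smul_mul, key, ← smul_neg, neg_sub]

/-- Jacobi's formula in dimension three. -/
lemma hasDerivWithinAt_matrix_det {A : ℝ → Matrix (Fin 3) (Fin 3) ℝ}
    {A' : Matrix (Fin 3) (Fin 3) ℝ} {s : Set ℝ} {t : ℝ} (hA : HasDerivWithinAt A A' s t)
    (hu : IsUnit (A t).det) :
    HasDerivWithinAt (fun x => (A x).det) ((A t).det * ((A t)⁻¹ * A').trace) s t := by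
  have h : (A t).det * ((A t)⁻¹ * A').trace = ((A t).adjugate * A').trace := by
    rw [Matrix.inv_def, Matrix.smul_mul, Matrix.trace_smul, smul_eq_mul, Ring.inverse_eq_inv',
      ← mul_assoc, mul_inv_cancel₀ hu.ne_zero, one_mul]
  rw [h]
  have e := fun i j => hasDerivWithinAt_entry hA i j
  simp only [Matrix.det_fin_three]
  refine (((((((e 0 0).mul (e 1 1)).mul (e 2 2)).sub (((e 0 0).mul (e 1 2)).mul (e 2 1))).sub
    (((e 0 1).mul (e 1 0)).mul (e 2 2))).add (((e 0 1).mul (e 1 2)).mul (e 2 0))).add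
    (((e 0 2).mul (e 1 0)).mul (e 2 1))).sub (((e 0 2).mul (e 1 1)).mul (e 2 0))
    |>.congr_deriv ?_
  simp only [Matrix.adjugate_fin_three, Matrix.trace_fin_three, Matrix.mul_apply, Fin.sum_univ_three,
    Matrix.of_apply, Matrix.cons_val', Matrix.cons_val_zero, Matrix.cons_val_one, Matrix.cons_val,
    Pi.mul_apply]
  ring

/-- A function with nonpositive derivative on `[t₀, ∞)` stays below its initial value. -/
lemma le_initial {t₀ : ℝ} {f f' : ℝ → ℝ}
    (hf : ∀ t ≥ t₀, HasDerivWithinAt f (f' t) (Set.Ici t₀) t)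
    (hf' : ∀ t ≥ t₀, f' t ≤ 0) {t : ℝ} (ht : t₀ ≤ t) : f t ≤ f t₀ := by
  have hanti : AntitoneOn f (Set.Ici t₀) := by
    refine antitoneOn_of_hasDerivWithinAt_nonpos (f' := f') (convex_Ici t₀)
      (fun x hx => (hf x hx).continuousWithinAt) (fun x hx => ?_) (fun x hx => ?_)
    · exact (hf x (interior_subset hx)).mono interior_subset
    · exact hf' x (interior_subset hx)
  exact hanti Set.self_mem_Ici ht ht

end Calculus

/-! ### Matter quantities -/

section Matter

variable {m : ℝ} {f₀ : (Fin 3 → ℝ) → ℝ} {g : Matrix (Fin 3) (Fin 3) ℝ}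

lemma continuous_quadForm (A : Matrix (Fin 3) (Fin 3) ℝ) :
    Continuous fun p : Fin 3 → ℝ => p ⬝ᵥ A.mulVec p :=
  continuous_id.dotProduct (continuous_const.matrix_mulVec continuous_id)

lemma energy_ge (hg : g.PosDef) (p : Fin 3 → ℝ) :
    m ≤ Real.sqrt (m ^ 2 + p ⬝ᵥ g⁻¹.mulVec p) :=
  Real.le_sqrt_of_sq_le (le_add_of_nonneg_right (normSq_nonneg hg p))

lemma continuous_energy (g : Matrix (Fin 3) (Fin 3) ℝ) :
    Continuous fun p : Fin 3 → ℝ => Real.sqrt (m ^ 2 + p ⬝ᵥ g⁻¹.mulVec p) :=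
  (continuous_const.add (continuous_quadForm _)).sqrt

lemma integrable_mul_of_cpt (hf : Continuous f₀) (hc : HasCompactSupport f₀)
    {c : (Fin 3 → ℝ) → ℝ} (hcc : Continuous c) : Integrable fun p => f₀ p * c p :=
  (hf.mul hcc).integrable_of_hasCompactSupport hc.mul_right

lemma continuous_quadForm_div_energy (hm : 0 < m) (hg : g.PosDef)
    (A : Matrix (Fin 3) (Fin 3) ℝ) :
    Continuous fun p : Fin 3 → ℝ => p ⬝ᵥ A.mulVec p / Real.sqrt (m ^ 2 + p ⬝ᵥ g⁻¹.mulVec p) :=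
  (continuous_quadForm A).div (continuous_energy g) fun p => (hm.trans_le (energy_ge hg p)).ne'

lemma trace_mul_stress (hm : 0 < m) (hg : g.PosDef) (hf : Continuous f₀)
    (hc : HasCompactSupport f₀) (A : Matrix (Fin 3) (Fin 3) ℝ) :
    (A * stress m f₀ g).trace * Real.sqrt g.det
      = ∫ p, f₀ p * (p ⬝ᵥ A.mulVec p / Real.sqrt (m ^ 2 + p ⬝ᵥ g⁻¹.mulVec p)) := by
  have hV : 0 < Real.sqrt g.det := Real.sqrt_pos.2 hg.det_pos
  have hint : ∀ i j : Fin 3, Integrable fun p : Fin 3 → ℝ =>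
      A i j * (f₀ p * p j * p i / (Real.sqrt (m ^ 2 + p ⬝ᵥ g⁻¹.mulVec p) * Real.sqrt g.det)) := by
    intro i j
    have hcc : Continuous fun p : Fin 3 → ℝ =>
        A i j * (p j * p i / (Real.sqrt (m ^ 2 + p ⬝ᵥ g⁻¹.mulVec p) * Real.sqrt g.det)) :=
      continuous_const.mul (((continuous_apply j).mul (continuous_apply i)).div
        ((continuous_energy g).mul continuous_const)
        fun p => (mul_pos (hm.trans_le (energy_ge hg p)) hV).ne')
    refine (integrable_mul_of_cpt hf hc hcc).congr (Filter.Eventually.of_forall fun p => ?_)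
    simp only
    ring
  have h1 : (A * stress m f₀ g).trace = ∫ p : Fin 3 → ℝ, ∑ i, ∑ j,
      A i j * (f₀ p * p j * p i /
        (Real.sqrt (m ^ 2 + p ⬝ᵥ g⁻¹.mulVec p) * Real.sqrt g.det)) := by
    rw [integral_finsetSum _ fun i _ => integrable_finsetSum _ fun j _ => hint i j]
    simp only [Matrix.trace, Matrix.diag_apply, Matrix.mul_apply, stress, Matrix.of_apply]
    refine Finset.sum_congr rfl fun i _ => ?_
    rw [integral_finsetSum _ fun j _ => hint i j]
    exact Finset.sum_congr rfl fun j _ => (integral_const_mul _ _).symm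
  rw [h1, ← integral_mul_const]
  refine integral_congr_ae (Filter.Eventually.of_forall fun p => ?_)
  have he := (hm.trans_le (energy_ge hg p)).ne'
  simp only [dotProduct, Matrix.mulVec, Finset.sum_mul, Finset.mul_sum, Finset.sum_div] at he ⊢
  refine Finset.sum_congr rfl fun i _ => Finset.sum_congr rfl fun j _ => ?_
  field_simp

lemma trace_stress_nonneg (hm : 0 < m) (hg : g.PosDef) (hf : Continuous f₀)
    (hc : HasCompactSupport f₀) (hf0 : ∀ p, 0 ≤ f₀ p) :
    0 ≤ (g⁻¹ * stress m f₀ g).trace * Real.sqrt g.det := by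
  rw [trace_mul_stress hm hg hf hc]
  exact integral_nonneg fun p =>
    mul_nonneg (hf0 p) (div_nonneg (normSq_nonneg hg p) (Real.sqrt_nonneg _))

lemma trace_stress_le (hm : 0 < m) (hg : g.PosDef) (hf : Continuous f₀)
    (hc : HasCompactSupport f₀) (hf0 : ∀ p, 0 ≤ f₀ p) {c : (Fin 3 → ℝ) → ℝ} (hcc : Continuous c)
    (hle : ∀ p, p ⬝ᵥ g⁻¹.mulVec p ≤ c p) :
    (g⁻¹ * stress m f₀ g).trace * Real.sqrt g.det ≤ (∫ p, f₀ p * c p) / m := by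
  rw [trace_mul_stress hm hg hf hc, ← integral_div]
  refine integral_mono (integrable_mul_of_cpt hf hc (continuous_quadForm_div_energy hm hg _))
    ((integrable_mul_of_cpt hf hc hcc).div_const m) fun p => ?_
  simp only
  rw [mul_div_assoc]
  exact mul_le_mul_of_nonneg_left (div_le_div₀ ((normSq_nonneg hg p).trans (hle p)) (hle p) hm
    (energy_ge hg p)) (hf0 p)

lemma abs_shear_stress_le (hm : 0 < m) (hg : g.PosDef) (hf : Continuous f₀)
    (hc : HasCompactSupport f₀) (hf0 : ∀ p, 0 ≤ f₀ p) {σ : Matrix (Fin 3) (Fin 3) ℝ}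
    (hσ : σ.IsSymm) :
    |(g⁻¹ * σ * g⁻¹ * stress m f₀ g).trace * Real.sqrt g.det|
      ≤ Real.sqrt (g⁻¹ * σ * g⁻¹ * σ).trace
        * ((g⁻¹ * stress m f₀ g).trace * Real.sqrt g.det) := by
  rw [trace_mul_stress hm hg hf hc, trace_mul_stress hm hg hf hc, ← integral_const_mul,
    ← Real.norm_eq_abs]
  refine norm_integral_le_of_norm_le
    ((integrable_mul_of_cpt hf hc (continuous_quadForm_div_energy hm hg g⁻¹)).const_mul _)
    (Filter.Eventually.of_forall fun p => ?_)
  have he := hm.trans_le (energy_ge hg p)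
  rw [Real.norm_eq_abs, abs_mul, abs_div, abs_of_nonneg (hf0 p), abs_of_pos he]
  calc _ ≤ f₀ p * (Real.sqrt (g⁻¹ * σ * g⁻¹ * σ).trace * (p ⬝ᵥ g⁻¹.mulVec p)
        / Real.sqrt (m ^ 2 + p ⬝ᵥ g⁻¹.mulVec p)) :=
        mul_le_mul_of_nonneg_left (div_le_div_of_nonneg_right (abs_shear_le hg hσ p) he.le) (hf0 p)
    _ = _ := by ring

lemma energyDensity_ge (hg : g.PosDef) (hf : Continuous f₀)
    (hc : HasCompactSupport f₀) (hf0 : ∀ p, 0 ≤ f₀ p) :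
    m * ∫ p, f₀ p ≤ energyDensity m f₀ g * Real.sqrt g.det := by
  have hV : 0 < Real.sqrt g.det := Real.sqrt_pos.2 hg.det_pos
  rw [energyDensity, integral_div, div_mul_cancel₀ _ hV.ne', mul_comm, ← integral_mul_const]
  exact integral_mono ((hf.integrable_of_hasCompactSupport hc).mul_const m)
    (integrable_mul_of_cpt hf hc (continuous_energy g))
    fun p => mul_le_mul_of_nonneg_left (energy_ge hg p) (hf0 p)

end Matter

/-! ### The scalar inequalities -/

section Scalar

/-- Decay of squared momenta: `N y^{7/6} exp (K η)`, with `η = h y / 2 = y'`, is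
nonincreasing along the flow. -/
lemma momentum_decay {t₀ ℓ : ℝ} (hℓ : 0 < ℓ) {h q w y : ℝ → ℝ}
    (hh : ∀ t ≥ t₀, 0 < h t) (hq : ∀ t ≥ t₀, 0 ≤ q t) (hw : ∀ t ≥ t₀, 0 ≤ w t)
    (hy : ∀ t ≥ t₀, 0 < y t)
    (dy : ∀ t ≥ t₀, HasDerivWithinAt y (h t * y t / 2) (Set.Ici t₀) t)
    (dη : ∀ t ≥ t₀, HasDerivWithinAt (fun t => h t * y t / 2)
      (-(3 / 8 * q t + w t) * y t) (Set.Ici t₀) t)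
    (hη : ∀ t ≥ t₀, ℓ ≤ h t * y t / 2) :
    ∃ A > 0, ∀ N N' : ℝ → ℝ, (∀ t ≥ t₀, HasDerivWithinAt N (N' t) (Set.Ici t₀) t) →
      (∀ t ≥ t₀, 0 ≤ N t) →
      (∀ t ≥ t₀, N' t ≤ (-(2 / 3) * h t + 2 * Real.sqrt (q t)) * N t) →
      ∀ t ≥ t₀, N t ≤ A * N t₀ * y t ^ (-(7 / 6) : ℝ) := by
  set K : ℝ := 16 / ℓ with hK
  have hKpos : 0 < K := by positivity
  refine ⟨y t₀ ^ (7 / 6 : ℝ) * Real.exp (K * (h t₀ * y t₀ / 2)),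
    mul_pos (Real.rpow_pos_of_pos (hy t₀ le_rfl) _) (Real.exp_pos _),
    fun N N' dN hN hN' t ht => ?_⟩
  have key := le_initial (t₀ := t₀)
    (f := fun t => N t * y t ^ (7 / 6 : ℝ) * Real.exp (K * (h t * y t / 2)))
    (f' := fun t => (N' t + N t * (7 / 12 * h t + K * (-(3 / 8 * q t + w t) * y t)))
      * (y t ^ (7 / 6 : ℝ) * Real.exp (K * (h t * y t / 2)))) ?_ ?_ ht
  · have hyp := Real.rpow_pos_of_pos (hy t ht) (7 / 6 : ℝ)
    have hexp : 1 ≤ Real.exp (K * (h t * y t / 2)) :=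
      Real.one_le_exp (mul_nonneg hKpos.le (hℓ.le.trans (hη t ht)))
    rw [Real.rpow_neg (hy t ht).le, ← div_eq_mul_inv, le_div_iff₀ hyp]
    calc N t * y t ^ (7 / 6 : ℝ)
        ≤ N t * y t ^ (7 / 6 : ℝ) * Real.exp (K * (h t * y t / 2)) :=
          le_mul_of_one_le_right (mul_nonneg (hN t ht) hyp.le) hexp
      _ ≤ _ := key
      _ = _ := by ring
  · intro t ht
    have hyt := hy t ht
    have h1 := ((dN t ht).mul ((dy t ht).rpow_const (p := 7 / 6) (Or.inl hyt.ne'))).mul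
      ((dη t ht).const_mul K).exp
    refine h1.congr_deriv ?_
    have h2 : y t ^ (7 / 6 : ℝ) = y t ^ (7 / 6 - 1 : ℝ) * y t := by
      rw [← Real.rpow_add_one hyt.ne']; norm_num
    simp only [Pi.mul_apply]
    rw [h2]
    ring
  · intro t ht
    have hyt := hy t ht
    have hht := hh t ht
    refine mul_nonpos_of_nonpos_of_nonneg ?_ (by positivity)
    -- Young's inequality `2 √q ≤ h / 12 + 12 q / h`, whose last term is absorbed by `K η'`.
    have hyoung : 2 * Real.sqrt (q t) * h t ≤ h t ^ 2 / 12 + 12 * q t := by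
      nlinarith [sq_nonneg (h t - 12 * Real.sqrt (q t)), Real.sq_sqrt (hq t ht)]
    have hKy : 32 ≤ K * y t * h t := by
      rw [hK, div_mul_eq_mul_div, div_mul_eq_mul_div, le_div_iff₀ hℓ]
      linarith [hη t ht]
    have hcoef : -(2 / 3) * h t + 2 * Real.sqrt (q t)
        + (7 / 12 * h t + K * (-(3 / 8 * q t + w t) * y t)) ≤ 0 := by
      by_contra! hcon
      have h3 := mul_pos hcon hht
      have h4 := mul_le_mul_of_nonneg_right hKy (hq t ht)
      have h5 : 0 ≤ K * y t * h t * w t := by have := hw t ht; positivity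
      nlinarith
    nlinarith [hN' t ht, hN t ht, mul_nonneg (hN t ht) (neg_nonneg.2 hcoef)]

/-- The rescaled shear `Q = V² |σ|²` stays bounded: `√(Q + 1)` grows at most at the rate
`8π V tr S`, which is integrable in time since `y' ≥ ℓ`. -/
lemma rescaled_shear_bounded {t₀ ℓ A : ℝ} (hℓ : 0 < ℓ) (hA : 0 ≤ A) {Q z s y y' V : ℝ → ℝ}
    (hQ : ∀ t ≥ t₀, 0 ≤ Q t) (hy : ∀ t ≥ t₀, 0 < y t)
    (dy : ∀ t ≥ t₀, HasDerivWithinAt y (y' t) (Set.Ici t₀) t) (hy' : ∀ t ≥ t₀, ℓ ≤ y' t)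
    (dQ : ∀ t ≥ t₀, HasDerivWithinAt Q (-(16 * Real.pi) * z t * V t ^ 2) (Set.Ici t₀) t)
    (hz : ∀ t ≥ t₀, |z t| * V t ^ 2 ≤ Real.sqrt (Q t) * (s t * V t))
    (hs : ∀ t ≥ t₀, s t * V t ≤ A * y t ^ (-(7 / 6) : ℝ)) (hs0 : ∀ t ≥ t₀, 0 ≤ s t * V t) :
    ∃ M > 0, ∀ t ≥ t₀, Q t ≤ M := by
  set K : ℝ := 48 * Real.pi * A / ℓ with hK
  have hK0 : 0 ≤ K := by have := Real.pi_pos; positivity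
  have key : ∀ t ≥ t₀, Real.sqrt (Q t + 1) + K * y t ^ (-(1 / 6) : ℝ)
      ≤ Real.sqrt (Q t₀ + 1) + K * y t₀ ^ (-(1 / 6) : ℝ) := by
    intro t ht
    refine le_initial (t₀ := t₀)
      (f := fun t => Real.sqrt (Q t + 1) + K * y t ^ (-(1 / 6) : ℝ))
      (f' := fun t => -(16 * Real.pi) * z t * V t ^ 2 / (2 * Real.sqrt (Q t + 1))
        + K * (y' t * (-(1 / 6)) * y t ^ (-(1 / 6) - 1 : ℝ))) ?_ ?_ ht
    · intro t ht
      have hQt := hQ t ht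
      exact (((dQ t ht).add_const 1).sqrt (by positivity)).add
        (((dy t ht).rpow_const (Or.inl (hy t ht).ne')).const_mul K)
    · intro t ht
      have hQt := hQ t ht
      have hpi := Real.pi_pos
      have hR : 0 < Real.sqrt (Q t + 1) := Real.sqrt_pos.2 (by linarith)
      have hyp := Real.rpow_pos_of_pos (hy t ht) (-(7 / 6) : ℝ)
      rw [show (-(1 / 6) - 1 : ℝ) = -(7 / 6) by norm_num]
      have h1 : -(16 * Real.pi) * z t * V t ^ 2 / (2 * Real.sqrt (Q t + 1))
          ≤ 8 * Real.pi * (A * y t ^ (-(7 / 6) : ℝ)) := by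
        rw [div_le_iff₀ (by positivity)]
        have h2 : -z t * V t ^ 2 ≤ Real.sqrt (Q t + 1) * (A * y t ^ (-(7 / 6) : ℝ)) :=
          calc -z t * V t ^ 2 ≤ |z t| * V t ^ 2 :=
                mul_le_mul_of_nonneg_right (neg_le_abs _) (sq_nonneg _)
            _ ≤ _ := hz t ht
            _ ≤ _ := mul_le_mul (Real.sqrt_le_sqrt (by linarith)) (hs t ht) (hs0 t ht) hR.le
        nlinarith
      have h3 : 8 * Real.pi * A * y t ^ (-(7 / 6) : ℝ)
          ≤ K * (1 / 6) * y' t * y t ^ (-(7 / 6) : ℝ) := by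
        refine mul_le_mul_of_nonneg_right ?_ hyp.le
        have h4 : K * ℓ = 48 * Real.pi * A := by rw [hK]; field_simp
        nlinarith [mul_le_mul_of_nonneg_left (hy' t ht) hK0]
      linarith
  set M := Real.sqrt (Q t₀ + 1) + K * y t₀ ^ (-(1 / 6) : ℝ) with hM
  have hQ0 := hQ t₀ le_rfl
  have hMpos : 0 < M := add_pos_of_pos_of_nonneg (Real.sqrt_pos.2 (by linarith))
    (mul_nonneg hK0 (Real.rpow_nonneg (hy t₀ le_rfl).le _))
  refine ⟨M ^ 2, by positivity, fun t ht => ?_⟩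
  have hQt := hQ t ht
  have h1 : Real.sqrt (Q t + 1) ≤ M := le_trans
    (le_add_of_nonneg_right (mul_nonneg hK0 (Real.rpow_nonneg (hy t ht).le _))) (key t ht)
  have h2 := (Real.sqrt_le_left hMpos.le).1 h1
  linarith

end Scalar

/-! ### The Einstein equations in scalar form -/

namespace BianchiIVlasov

variable {t₀ m : ℝ} {g k : ℝ → Matrix (Fin 3) (Fin 3) ℝ} {f₀ : (Fin 3 → ℝ) → ℝ}

lemma isUnit_det (hsol : BianchiIVlasov t₀ m g k f₀) {t : ℝ} (ht : t₀ ≤ t) :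
    IsUnit (g t).det :=
  (hsol.g_posdef t ht).det_pos.ne'.isUnit

lemma hasDeriv_inv (hsol : BianchiIVlasov t₀ m g k f₀) {t : ℝ} (ht : t₀ ≤ t) :
    HasDerivWithinAt (fun t => (g t)⁻¹) ((2 : ℝ) • ((g t)⁻¹ * k t * (g t)⁻¹)) (Set.Ici t₀) t := by
  refine (hasDerivWithinAt_matrix_inv (hsol.evol_g t ht) (fun x hx => hsol.isUnit_det hx)
    ht).congr_deriv ?_
  simp only [neg_smul, Matrix.mul_neg, Matrix.neg_mul, neg_neg, Matrix.mul_smul, Matrix.smul_mul]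

/-- The evolution of the mixed second fundamental form `k^a_b`, in which the quadratic term
drops out. -/
lemma hasDeriv_mixed (hsol : BianchiIVlasov t₀ m g k f₀) {t : ℝ} (ht : t₀ ≤ t) :
    HasDerivWithinAt (fun t => (g t)⁻¹ * k t)
      (meanCurv (g t) (k t) • ((g t)⁻¹ * k t) - (8 * Real.pi) • ((g t)⁻¹ * stress m f₀ (g t))
        + (4 * Real.pi * ((g t)⁻¹ * stress m f₀ (g t)).trace
          - 4 * Real.pi * energyDensity m f₀ (g t)) • (1 : Matrix (Fin 3) (Fin 3) ℝ))
      (Set.Ici t₀) t := by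
  refine (hasDerivWithinAt_matrix_mul (hsol.hasDeriv_inv ht) (hsol.evol_k t ht)).congr_deriv ?_
  simp only [Matrix.mul_sub, Matrix.mul_smul, Matrix.smul_mul,
    Matrix.nonsing_inv_mul _ (hsol.isUnit_det ht), Matrix.mul_assoc, smul_sub, smul_smul]
  module

lemma hasDeriv_meanCurv (hsol : BianchiIVlasov t₀ m g k f₀) {t : ℝ} (ht : t₀ ≤ t) :
    HasDerivWithinAt (fun t => meanCurv (g t) (k t))
      (meanCurv (g t) (k t) ^ 2 + 4 * Real.pi * ((g t)⁻¹ * stress m f₀ (g t)).trace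
        - 12 * Real.pi * energyDensity m f₀ (g t)) (Set.Ici t₀) t := by
  refine (hasDerivWithinAt_trace (hsol.hasDeriv_mixed ht)).congr_deriv ?_
  simp only [Matrix.trace_add, Matrix.trace_sub, Matrix.trace_smul, smul_eq_mul, Matrix.trace_one,
    Fintype.card_fin]
  rw [show ((g t)⁻¹ * k t).trace = meanCurv (g t) (k t) from rfl]
  push_cast
  ring

lemma shear_sq_eq (hsol : BianchiIVlasov t₀ m g k f₀) {t : ℝ} (ht : t₀ ≤ t) :
    ((g t)⁻¹ * shear (g t) (k t) * (g t)⁻¹ * shear (g t) (k t)).trace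
      = 2 / 3 * meanCurv (g t) (k t) ^ 2 - 16 * Real.pi * energyDensity m f₀ (g t) := by
  rw [trace_shear (hsol.g_posdef t ht)]
  linarith [hsol.constraint t ht]

lemma hasDeriv_shear_sq (hsol : BianchiIVlasov t₀ m g k f₀) {t : ℝ} (ht : t₀ ≤ t) :
    HasDerivWithinAt
      (fun t => ((g t)⁻¹ * shear (g t) (k t) * (g t)⁻¹ * shear (g t) (k t)).trace)
      (2 * meanCurv (g t) (k t)
          * ((g t)⁻¹ * shear (g t) (k t) * (g t)⁻¹ * shear (g t) (k t)).trace
        - 16 * Real.pi * ((g t)⁻¹ * shear (g t) (k t) * (g t)⁻¹ * stress m f₀ (g t)).trace)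
      (Set.Ici t₀) t := by
  have hK := hsol.hasDeriv_mixed ht
  have h1 := (hasDerivWithinAt_trace (hasDerivWithinAt_matrix_mul hK hK)).sub
    (((hsol.hasDeriv_meanCurv ht).pow 2).div_const 3)
  have hcongr : ∀ x ∈ Set.Ici t₀,
      ((g x)⁻¹ * shear (g x) (k x) * (g x)⁻¹ * shear (g x) (k x)).trace
        = ((g x)⁻¹ * k x * ((g x)⁻¹ * k x)).trace - meanCurv (g x) (k x) ^ 2 / 3 := by
    intro x hx
    rw [trace_shear (hsol.g_posdef x hx), Matrix.mul_assoc ((g x)⁻¹ * k x)]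
  refine (h1.congr_of_mem hcongr ht).congr_deriv ?_
  have hz : ((g t)⁻¹ * shear (g t) (k t) * (g t)⁻¹ * stress m f₀ (g t)).trace
      = ((g t)⁻¹ * k t * ((g t)⁻¹ * stress m f₀ (g t))).trace
        - meanCurv (g t) (k t) / 3 * ((g t)⁻¹ * stress m f₀ (g t)).trace := by
    rw [Matrix.mul_assoc ((g t)⁻¹ * shear (g t) (k t)), shear, Matrix.mul_sub, Matrix.mul_smul,
      Matrix.nonsing_inv_mul _ (hsol.isUnit_det ht), Matrix.sub_mul, Matrix.trace_sub,
      Matrix.smul_mul, Matrix.one_mul, Matrix.trace_smul, smul_eq_mul]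
  rw [hz, hcongr t ht]
  simp only [Matrix.add_mul, Matrix.sub_mul, Matrix.mul_add, Matrix.mul_sub, Matrix.smul_mul,
    Matrix.mul_smul, Matrix.one_mul, Matrix.mul_one, Matrix.trace_add, Matrix.trace_sub,
    Matrix.trace_smul, smul_eq_mul]
  rw [Matrix.trace_mul_comm ((g t)⁻¹ * stress m f₀ (g t)) ((g t)⁻¹ * k t),
    show ((g t)⁻¹ * k t).trace = meanCurv (g t) (k t) from rfl]
  push_cast
  ring

lemma hasDeriv_volume (hsol : BianchiIVlasov t₀ m g k f₀) {t : ℝ} (ht : t₀ ≤ t) :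
    HasDerivWithinAt (fun t => Real.sqrt (g t).det)
      (-meanCurv (g t) (k t) * Real.sqrt (g t).det) (Set.Ici t₀) t := by
  have hd := (hsol.g_posdef t ht).det_pos
  refine ((hasDerivWithinAt_matrix_det (hsol.evol_g t ht) (hsol.isUnit_det ht)).sqrt
    hd.ne').congr_deriv ?_
  rw [Matrix.mul_smul, Matrix.trace_smul, smul_eq_mul,
    show ((g t)⁻¹ * k t).trace = meanCurv (g t) (k t) from rfl,
    div_eq_iff (by positivity)]
  linear_combination 2 * meanCurv (g t) (k t) * Real.mul_self_sqrt hd.le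

lemma hasDeriv_normSq (hsol : BianchiIVlasov t₀ m g k f₀) {t : ℝ} (ht : t₀ ≤ t)
    (p : Fin 3 → ℝ) :
    HasDerivWithinAt (fun t => p ⬝ᵥ (g t)⁻¹.mulVec p)
      (2 / 3 * meanCurv (g t) (k t) * (p ⬝ᵥ (g t)⁻¹.mulVec p)
        + 2 * (p ⬝ᵥ ((g t)⁻¹ * shear (g t) (k t) * (g t)⁻¹).mulVec p)) (Set.Ici t₀) t := by
  refine (hasDerivWithinAt_quadForm (hsol.hasDeriv_inv ht) p).congr_deriv ?_
  have h : (g t)⁻¹ * shear (g t) (k t) * (g t)⁻¹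
      = (g t)⁻¹ * k t * (g t)⁻¹ - (meanCurv (g t) (k t) / 3) • (g t)⁻¹ := by
    rw [shear, Matrix.mul_sub, Matrix.mul_smul, Matrix.nonsing_inv_mul _ (hsol.isUnit_det ht),
      Matrix.sub_mul, Matrix.smul_mul, Matrix.one_mul]
  rw [h]
  simp only [Matrix.sub_mulVec, Matrix.smul_mulVec, dotProduct_sub, dotProduct_smul, smul_eq_mul]
  ring

/-- Expansion never stops: by the constraint `H² ≥ 24 π ρ > 0`, so `H` keeps its sign. -/
lemma meanCurv_neg (hsol : BianchiIVlasov t₀ m g k f₀)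
    (hexp : meanCurv (g t₀) (k t₀) < 0)
    (hρ : ∀ t ≥ t₀, 0 < energyDensity m f₀ (g t)) {t : ℝ} (ht : t₀ ≤ t) :
    meanCurv (g t) (k t) < 0 := by
  by_contra! hcon
  have hcont : ContinuousOn (fun t => meanCurv (g t) (k t)) (Set.Icc t₀ t) := fun x hx =>
    ((hsol.hasDeriv_meanCurv hx.1).continuousWithinAt).mono Set.Icc_subset_Ici_self
  obtain ⟨x, hx, hx0⟩ := intermediate_value_Icc ht hcont ⟨hexp.le, hcon⟩
  simp only at hx0
  have h1 := hsol.shear_sq_eq hx.1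
  have h2 := trace_sq_nonneg (hsol.g_posdef x hx.1)
    (shear_isSymm (hsol.g_symm x hx.1) (hsol.k_symm x hx.1))
  have h3 := mul_pos Real.pi_pos (hρ x hx.1)
  rw [h1, hx0] at h2
  nlinarith

/-- The quadratic decay rate holds for every expanding solution with `f₀ ≠ 0`, without any
smallness assumption on the data at `t₀`. -/
theorem anisotropy_decay (hsol : BianchiIVlasov t₀ m g k f₀)
    (hexp : meanCurv (g t₀) (k t₀) < 0) (hf₀ : f₀ ≠ 0) :
    ∃ C > 0, ∀ t > t₀, anisotropy (g t) (k t) ≤ C / (t - t₀) ^ 2 := by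
  have hm := hsol.m_pos
  have hpi := Real.pi_pos
  have hfc := hsol.f₀_smooth.continuous
  have hcs := hsol.f₀_cpt
  have hf0 := hsol.f₀_nonneg
  have hint : 0 < ∫ p, f₀ p := by
    obtain ⟨p, hp⟩ := Function.ne_iff.1 hf₀
    exact hfc.integral_pos_of_hasCompactSupport_nonneg_nonzero hcs hf0 hp
  have hμ : 0 < m * ∫ p, f₀ p := mul_pos hm hint
  set h : ℝ → ℝ := fun t => -meanCurv (g t) (k t) with hh
  set q : ℝ → ℝ := fun t =>
    ((g t)⁻¹ * shear (g t) (k t) * (g t)⁻¹ * shear (g t) (k t)).trace with hq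
  set V : ℝ → ℝ := fun t => Real.sqrt (g t).det with hV
  set y : ℝ → ℝ := fun t => Real.sqrt (V t) with hy
  set ρ : ℝ → ℝ := fun t => energyDensity m f₀ (g t) with hρ
  set s : ℝ → ℝ := fun t => ((g t)⁻¹ * stress m f₀ (g t)).trace with hs
  set z : ℝ → ℝ := fun t =>
    ((g t)⁻¹ * shear (g t) (k t) * (g t)⁻¹ * stress m f₀ (g t)).trace with hz
  set ℓ : ℝ := Real.sqrt (6 * Real.pi * (m * ∫ p, f₀ p)) with hℓ
  have hℓpos : 0 < ℓ := Real.sqrt_pos.2 (by positivity)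
  have hσ : ∀ t ≥ t₀, (shear (g t) (k t)).IsSymm := fun t ht =>
    shear_isSymm (hsol.g_symm t ht) (hsol.k_symm t ht)
  have hVpos : ∀ t ≥ t₀, 0 < V t := fun t ht => Real.sqrt_pos.2 (hsol.g_posdef t ht).det_pos
  have hypos : ∀ t ≥ t₀, 0 < y t := fun t ht => Real.sqrt_pos.2 (hVpos t ht)
  have hyV : ∀ t ≥ t₀, y t ^ 2 = V t := fun t ht => Real.sq_sqrt (hVpos t ht).le
  have hρV : ∀ t ≥ t₀, m * ∫ p, f₀ p ≤ ρ t * V t := fun t ht =>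
    energyDensity_ge (hsol.g_posdef t ht) hfc hcs hf0
  have hρpos : ∀ t ≥ t₀, 0 < ρ t := fun t ht =>
    pos_of_mul_pos_left (hμ.trans_le (hρV t ht)) (hVpos t ht).le
  have hhpos : ∀ t ≥ t₀, 0 < h t := fun t ht =>
    neg_pos.2 (hsol.meanCurv_neg hexp hρpos ht)
  have hq0 : ∀ t ≥ t₀, 0 ≤ q t := fun t ht => trace_sq_nonneg (hsol.g_posdef t ht) (hσ t ht)
  have hsV0 : ∀ t ≥ t₀, 0 ≤ s t * V t := fun t ht =>
    trace_stress_nonneg hm (hsol.g_posdef t ht) hfc hcs hf0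
  have hs0 : ∀ t ≥ t₀, 0 ≤ s t := fun t ht => nonneg_of_mul_nonneg_left (hsV0 t ht) (hVpos t ht)
  have hcon : ∀ t ≥ t₀, q t = 2 / 3 * h t ^ 2 - 16 * Real.pi * ρ t := fun t ht => by
    simp only [hq, hh, hρ, neg_sq]
    exact hsol.shear_sq_eq ht
  have dV : ∀ t ≥ t₀, HasDerivWithinAt V (h t * V t) (Set.Ici t₀) t := fun t ht =>
    hsol.hasDeriv_volume ht
  have dy : ∀ t ≥ t₀, HasDerivWithinAt y (h t * y t / 2) (Set.Ici t₀) t := by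
    intro t ht
    refine ((dV t ht).sqrt (hVpos t ht).ne').congr_deriv ?_
    have h1 := hypos t ht
    rw [← hyV t ht, Real.sqrt_sq h1.le]
    field_simp
  have dh : ∀ t ≥ t₀, HasDerivWithinAt h
      (-(h t ^ 2 + 4 * Real.pi * s t - 12 * Real.pi * ρ t)) (Set.Ici t₀) t := by
    intro t ht
    refine (hsol.hasDeriv_meanCurv ht).neg.congr_deriv ?_
    simp only [hh, hs, hρ, neg_sq]
  have dη : ∀ t ≥ t₀, HasDerivWithinAt (fun t => h t * y t / 2)
      (-(3 / 8 * q t + 2 * Real.pi * s t) * y t) (Set.Ici t₀) t := by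
    intro t ht
    refine (((dh t ht).mul (dy t ht)).div_const 2).congr_deriv ?_
    rw [hcon t ht]
    ring
  have hη : ∀ t ≥ t₀, ℓ ≤ h t * y t / 2 := by
    intro t ht
    have h1 := hhpos t ht
    have h2 := hypos t ht
    refine Real.sqrt_le_iff.2 ⟨by positivity, ?_⟩
    rw [div_pow, mul_pow, hyV t ht]
    have h3 : 24 * Real.pi * ρ t ≤ h t ^ 2 := by linarith [hcon t ht, hq0 t ht]
    nlinarith [mul_le_mul_of_nonneg_right h3 (hVpos t ht).le,
      mul_le_mul_of_nonneg_left (hρV t ht) hpi.le]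
  -- Decay of the momenta, hence of the trace of the stress tensor.
  obtain ⟨A, hA, hN⟩ := momentum_decay hℓpos (w := fun t => 2 * Real.pi * s t) hhpos hq0
    (fun t ht => by have := hs0 t ht; positivity) hypos dy dη hη
  have hNp : ∀ p : Fin 3 → ℝ, ∀ t ≥ t₀, p ⬝ᵥ (g t)⁻¹.mulVec p
      ≤ A * (p ⬝ᵥ (g t₀)⁻¹.mulVec p) * y t ^ (-(7 / 6) : ℝ) := fun p =>
    hN _ _ (fun t ht => hsol.hasDeriv_normSq ht p)
      (fun t ht => normSq_nonneg (hsol.g_posdef t ht) p) (fun t ht => by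
        have h1 := (le_abs_self _).trans (abs_shear_le (hsol.g_posdef t ht) (hσ t ht) p)
        simp only [hh, hq]
        linarith)
  set E : ℝ := ∫ p, f₀ p * (p ⬝ᵥ (g t₀)⁻¹.mulVec p) with hE
  have hE0 : 0 ≤ E := integral_nonneg fun p =>
    mul_nonneg (hf0 p) (normSq_nonneg (hsol.g_posdef t₀ le_rfl) p)
  have hsV : ∀ t ≥ t₀, s t * V t ≤ A * E / m * y t ^ (-(7 / 6) : ℝ) := by
    intro t ht
    refine (trace_stress_le hm (hsol.g_posdef t ht) hfc hcs hf0
      (c := fun p => A * (p ⬝ᵥ (g t₀)⁻¹.mulVec p) * y t ^ (-(7 / 6) : ℝ))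
      ((continuous_const.mul (continuous_quadForm _)).mul continuous_const)
      (fun p => hNp p t ht)).trans_eq ?_
    have h1 : ∀ p : Fin 3 → ℝ,
        f₀ p * (A * (p ⬝ᵥ (g t₀)⁻¹.mulVec p) * y t ^ (-(7 / 6) : ℝ))
          = (A * y t ^ (-(7 / 6) : ℝ)) * (f₀ p * (p ⬝ᵥ (g t₀)⁻¹.mulVec p)) := fun p => by ring
    rw [integral_congr_ae (Filter.Eventually.of_forall h1), integral_const_mul]
    ring
  have dQ : ∀ t ≥ t₀, HasDerivWithinAt (fun t => q t * V t ^ 2)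
      (-(16 * Real.pi) * z t * V t ^ 2) (Set.Ici t₀) t := by
    intro t ht
    refine ((hsol.hasDeriv_shear_sq ht).mul ((dV t ht).pow 2)).congr_deriv ?_
    simp only [hz, hh, Pi.pow_apply]
    push_cast
    ring
  obtain ⟨M, hM, hQ⟩ := rescaled_shear_bounded hℓpos (A := A * E / m) (by positivity)
    (Q := fun t => q t * V t ^ 2) (z := z) (s := s) (y := y) (V := V)
    (fun t ht => mul_nonneg (hq0 t ht) (sq_nonneg _)) hypos dy hη dQ
    (fun t ht => by
      have h1 := abs_shear_stress_le hm (hsol.g_posdef t ht) hfc hcs hf0 (hσ t ht)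
      have h2 : |z t| * V t ≤ Real.sqrt (q t) * (s t * V t) := by
        rwa [abs_mul, abs_of_pos (hVpos t ht)] at h1
      rw [Real.sqrt_mul (hq0 t ht), Real.sqrt_sq (hVpos t ht).le]
      nlinarith [mul_le_mul_of_nonneg_right h2 (hVpos t ht).le]) hsV hsV0
  refine ⟨M / (4 * ℓ ^ 4), by positivity, fun t ht => ?_⟩
  have ht' : t₀ ≤ t := ht.le
  have hx : 0 < t - t₀ := sub_pos.2 ht
  -- `y' ≥ ℓ` gives linear growth of `y`, hence `H V = 2 y y'` also grows linearly.
  have hylin : ℓ * (t - t₀) ≤ y t := by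
    have h1 := le_initial (t₀ := t₀) (f := fun t => ℓ * (t - t₀) - y t)
      (f' := fun t => ℓ * 1 - h t * y t / 2)
      (fun t ht => ((((hasDerivWithinAt_id t _).sub_const t₀).const_mul ℓ).sub (dy t ht)))
      (fun t ht => by linarith [hη t ht]) ht'
    simp only [sub_self, mul_zero, zero_sub] at h1
    linarith [hypos t₀ le_rfl]
  have hhV : 2 * ℓ ^ 2 * (t - t₀) ≤ h t * V t := by
    have h1 : h t * V t = 2 * (h t * y t / 2) * y t := by rw [← hyV t ht']; ring
    have h2 := mul_le_mul (hη t ht') hylin (by positivity) (hℓpos.le.trans (hη t ht'))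
    rw [h1]
    linarith
  have hht := hhpos t ht'
  have hVt := hVpos t ht'
  have hF : anisotropy (g t) (k t) = q t * V t ^ 2 / (h t * V t) ^ 2 := by
    have h1 : anisotropy (g t) (k t) = q t / h t ^ 2 := by
      simp only [anisotropy, hq, hh, neg_sq]
    rw [h1]
    field_simp
  rw [hF]
  calc q t * V t ^ 2 / (h t * V t) ^ 2 ≤ M / (2 * ℓ ^ 2 * (t - t₀)) ^ 2 :=
        div_le_div₀ hM.le (hQ t ht') (by positivity)
          (pow_le_pow_left₀ (by positivity) hhV 2)
    _ = _ := by field_simp; ring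

end BianchiIVlasov

/-! ### Conclusion -/

/-- **Quadratic decay of the anisotropy.**
For a smooth expanding solution of the Bianchi I Einstein–Vlasov system with `f₀` not
identically zero, if the initial anisotropy `F(t₀)` and the initial momentum supremum
`P(t₀)` are sufficiently small, then `F(t) = O(t⁻²)`; in particular the spacetime
isotropizes, `F(t) → 0` as `t → ∞`. -/
theorem anisotropy_late_time (t₀ m : ℝ) (g k : ℝ → Matrix (Fin 3) (Fin 3) ℝ)
    (f₀ : (Fin 3 → ℝ) → ℝ) (hsol : BianchiIVlasov t₀ m g k f₀)
    (hexp : meanCurv (g t₀) (k t₀) < 0) (hf₀ : f₀ ≠ 0) :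
    ∃ ε₀ > (0 : ℝ), ∃ C > (0 : ℝ),
      anisotropy (g t₀) (k t₀) ≤ ε₀ → momentumSup f₀ (g t₀) ≤ ε₀ →
        (∃ T ≥ t₀, ∀ t ≥ T, anisotropy (g t) (k t) ≤ C * t ^ (-(2 : ℝ))) ∧
          Filter.Tendsto (fun t => anisotropy (g t) (k t)) Filter.atTop (nhds 0) := by
  obtain ⟨C, hC, hF⟩ := hsol.anisotropy_decay hexp hf₀
  -- The decay needs no smallness, so any `ε₀` will do.
  refine ⟨1, one_pos, 4 * C, by positivity, fun _ _ => ?_⟩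
  set T : ℝ := max (t₀ + 1) (max (2 * t₀) 1) with hT
  have hbound : ∀ t ≥ T, anisotropy (g t) (k t) ≤ 4 * C * t ^ (-(2 : ℝ)) := by
    intro t ht
    have h1 : t₀ + 1 ≤ t := (le_max_left _ _).trans ht
    have h2 : 2 * t₀ ≤ t := ((le_max_left _ _).trans (le_max_right _ _)).trans ht
    have h3 : 1 ≤ t := ((le_max_right _ _).trans (le_max_right _ _)).trans ht
    have ht0 : 0 < t := by linarith
    refine (hF t (by linarith)).trans ?_
    rw [Real.rpow_neg ht0.le, Real.rpow_two, ← div_eq_mul_inv]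
    calc C / (t - t₀) ^ 2 ≤ C / (t / 2) ^ 2 :=
          div_le_div_of_nonneg_left hC.le (by positivity)
            (pow_le_pow_left₀ (by positivity) (by linarith) 2)
      _ = _ := by field_simp; norm_num
  have hTt₀ : t₀ ≤ T := (by linarith : t₀ ≤ t₀ + 1).trans (le_max_left _ _)
  refine ⟨⟨T, hTt₀, hbound⟩, ?_⟩
  have hlim : Filter.Tendsto (fun t : ℝ => 4 * C * t ^ (-(2 : ℝ))) Filter.atTop (nhds 0) := by
    simpa using (tendsto_rpow_neg_atTop (by norm_num : (0 : ℝ) < 2)).const_mul (4 * C)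
  refine squeeze_zero' ?_ ?_ hlim
  · filter_upwards [Filter.eventually_ge_atTop t₀] with t ht
    exact div_nonneg (trace_sq_nonneg (hsol.g_posdef t ht)
      (shear_isSymm (hsol.g_symm t ht) (hsol.k_symm t ht))) (sq_nonneg _)
  · filter_upwards [Filter.eventually_ge_atTop T] with t ht
    exact hbound t ht
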